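/- There exist δ > 0 and c > 0, depending only on γ, R, T∞, θ and ε, such that whenever φ_b ∈ (0, δ], the coefficient functions satisfy, for every x₁ ≥ 0: q₁(x₁)q₅(x₁)² + q₄(x₁)q₂(x₁)² − 4q₁(x₁)q₃(x₁)q₄(x₁) ≤ −c B(x₁)^{−2}. -/

import Mathlib

/-!
With `t = 1 / (B² Γ²)` the five coefficients are `a + t • b(S)`, and the quantity to estimate is a
cubic form `Δ` evaluated there. The values `a` at infinity are degenerate, `Δ a = 0`, so to first
order in `t` the sign is that of the derivative of `Δ` at `a` in the direction `b(S)`; this equals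
`-ε² R² / (γ - 1)` times a quantity increasing in `S ≥ 1`, and `ε < λ₀` makes it positive at
`S = 1`. The bounds `θ ≤ β / (Γ φ_b^{1/2}) ≤ 1` confine `S` to the compact interval `[1, θ⁻¹]` and
give `t ≤ φ_b`, so the sign persists uniformly for small `φ_b`.
-/

noncomputable def Bfun (β x : ℝ) : ℝ := x + β⁻¹

noncomputable def Sfun (β Γ φb x : ℝ) : ℝ :=
  (x + β⁻¹) / (x + Γ⁻¹ * (Real.sqrt φb)⁻¹)

noncomputable def q1 (γ R T Γ ε β φb x : ℝ) : ℝ :=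
  (ε / 2) * R * T +
    (((1 - R * T) * ε / 2) * (Sfun β Γ φb x) ^ 2
      - (Γ ^ 2 / 2) * ε * (ε - 1) * (ε - 2)
      + (γ * R * T - 1) * (Sfun β Γ φb x) ^ 3) / ((Bfun β x) ^ 2 * Γ ^ 2)

noncomputable def q2 (γ R T Γ ε β φb x : ℝ) : ℝ :=
  -(R * T * ε) +
    (2 * ε * R * T * (Sfun β Γ φb x) ^ 2
      + 2 * (1 - γ * R * T) * (Sfun β Γ φb x) ^ 3) / ((Bfun β x) ^ 2 * Γ ^ 2)

noncomputable def q3 (γ R T Γ ε β φb x : ℝ) : ℝ :=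
  (ε / 2) * γ * R * T +
    (((1 - R * T) * ε / 2) * (Sfun β Γ φb x) ^ 2
      + (3 * γ * R * T + 3) * (Sfun β Γ φb x) ^ 3) / ((Bfun β x) ^ 2 * Γ ^ 2)

noncomputable def q4 (γ R T Γ ε β φb x : ℝ) : ℝ :=
  ε * R / (2 * (γ - 1) * T) +
    (-(ε * R / (2 * (γ - 1) * T)) * (Sfun β Γ φb x) ^ 2
      + (γ * R / ((γ - 1) * T)) * (Sfun β Γ φb x) ^ 3) / ((Bfun β x) ^ 2 * Γ ^ 2)

noncomputable def q5 (γ R T Γ ε β φb x : ℝ) : ℝ :=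
  -(ε * R) + 2 * ε * R * (Sfun β Γ φb x) ^ 2 / ((Bfun β x) ^ 2 * Γ ^ 2)

open Set Topology

/-- The quantity `c₁c₅² + c₄c₂² - 4c₁c₃c₄`, with `cᵢ` stored at index `i - 1`: it is `-4` times the
determinant of the quadratic form `c₁u² + c₂uv + c₃v² + c₅vw + c₄w²`. -/
def tridiagDiscr {A : Type*} [CommRing A] (c : Fin 5 → A) : A :=
  c 0 * c 4 ^ 2 + c 3 * c 1 ^ 2 - 4 * c 0 * c 2 * c 3

/-- The derivative of `tridiagDiscr` at `a` in the direction `b`. -/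
def tridiagDiscrDeriv {A : Type*} [CommRing A] (a b : Fin 5 → A) : A :=
  b 0 * (a 4 ^ 2 - 4 * a 2 * a 3) + 2 * a 3 * a 1 * b 1 - 4 * a 0 * a 3 * b 2
    + b 3 * (a 1 ^ 2 - 4 * a 0 * a 2) + 2 * a 0 * a 4 * b 4

theorem tridiagDiscr_add_smul {A : Type*} [CommRing A] (a b : Fin 5 → A) (t : A) :
    tridiagDiscr (a + t • b) = tridiagDiscr a + t * tridiagDiscrDeriv a b
      + t ^ 2 * tridiagDiscrDeriv b a + t ^ 3 * tridiagDiscr b := by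
  simp only [tridiagDiscr, tridiagDiscrDeriv, Pi.add_apply, Pi.smul_apply, smul_eq_mul]
  ring

section Compactness

variable {X : Type*} [TopologicalSpace X] {K : Set X}

theorem exists_forall_le_neg_of_isCompact {g : X → ℝ → ℝ} (hK : IsCompact K)
    (hg : Continuous g.uncurry) (hneg : ∀ s ∈ K, g s 0 < 0) :
    ∃ δ > 0, ∀ s ∈ K, ∀ t ∈ Icc 0 δ, g s t ≤ -δ := by
  have hnear : ∀ᶠ p : ℝ × ℝ in 𝓝 0, ∀ s ∈ K, g s p.1 + p.2 < 0 := by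
    refine hK.eventually_forall_of_forall_eventually fun s hs ↦ ?_
    have hcont : Continuous fun z : (ℝ × ℝ) × X ↦ g z.2 z.1.1 + z.1.2 :=
      (hg.comp (by fun_prop : Continuous fun z : (ℝ × ℝ) × X ↦ (z.2, z.1.1))).add (by fun_prop)
    exact hcont.continuousAt.eventually_lt_const (by simpa using hneg s hs)
  obtain ⟨r, hr, hball⟩ := Metric.eventually_nhds_iff_ball.1 hnear
  refine ⟨r / 2, half_pos hr, fun s hs t ht ↦ ?_⟩
  have hmem : (t, r / 2) ∈ Metric.ball (0 : ℝ × ℝ) r := by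
    rw [mem_ball_zero_iff, Prod.norm_mk, Real.norm_of_nonneg ht.1,
      Real.norm_of_nonneg (half_pos hr).le]
    exact max_lt (ht.2.trans_lt (half_lt_self hr)) (half_lt_self hr)
  linarith [hball _ hmem s hs]

theorem exists_forall_tridiagDiscr_add_smul_le {a : Fin 5 → ℝ} {b : X → Fin 5 → ℝ}
    (hK : IsCompact K) (hb : Continuous b) (ha : tridiagDiscr a = 0)
    (hneg : ∀ s ∈ K, tridiagDiscrDeriv a (b s) < 0) :
    ∃ δ > 0, ∀ s ∈ K, ∀ t ∈ Icc 0 δ, tridiagDiscr (a + t • b s) ≤ -(δ * t) := by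
  let slope (s : X) (t : ℝ) : ℝ :=
    tridiagDiscrDeriv a (b s) + t * tridiagDiscrDeriv (b s) a + t ^ 2 * tridiagDiscr (b s)
  have hslope : Continuous slope.uncurry := by
    simp only [slope, tridiagDiscr, tridiagDiscrDeriv, Function.uncurry_def]
    fun_prop
  obtain ⟨δ, hδ, hle⟩ :=
    exists_forall_le_neg_of_isCompact hK hslope fun s hs ↦ by simpa [slope] using hneg s hs
  refine ⟨δ, hδ, fun s hs t ht ↦ ?_⟩
  calc tridiagDiscr (a + t • b s) = t * slope s t := by
        rw [tridiagDiscr_add_smul, ha]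
        ring
    _ ≤ t * -δ := mul_le_mul_of_nonneg_left (hle s hs t ht) ht.1
    _ = -(δ * t) := by ring

end Compactness

section Coefficients

variable {γ R T Γ ε β φb θ x s : ℝ}

/-- The values of `q₁, …, q₅` at `x₁ = ∞`. -/
noncomputable def limitCoeff (γ R T ε : ℝ) : Fin 5 → ℝ :=
  ![ε / 2 * R * T, -(R * T * ε), ε / 2 * γ * R * T, ε * R / (2 * (γ - 1) * T), -(ε * R)]

/-- The brackets multiplying `B⁻² Γ⁻²` in `q₁, …, q₅`, as functions of `s = S(x₁)`. -/
noncomputable def correctionCoeff (γ R T Γ ε s : ℝ) : Fin 5 → ℝ :=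
  ![(1 - R * T) * ε / 2 * s ^ 2 - Γ ^ 2 / 2 * ε * (ε - 1) * (ε - 2) + (γ * R * T - 1) * s ^ 3,
    2 * ε * R * T * s ^ 2 + 2 * (1 - γ * R * T) * s ^ 3,
    (1 - R * T) * ε / 2 * s ^ 2 + (3 * γ * R * T + 3) * s ^ 3,
    -(ε * R / (2 * (γ - 1) * T)) * s ^ 2 + γ * R / ((γ - 1) * T) * s ^ 3,
    2 * ε * R * s ^ 2]

/-- The derivative of `tridiagDiscr` at `limitCoeff` in the direction `correctionCoeff`, divided by
`-ε² R² / (γ - 1)`: the discriminant decreases to first order where this is positive. -/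
noncomputable def discrMargin (γ R T Γ ε s : ℝ) : ℝ :=
  ε * (1 + R * T + 3 / 2 * (γ - 1) * (R * T)) * s ^ 2 + (4 + γ * (γ + 1) * (R * T)) * s ^ 3
    - Γ ^ 2 / 2 * (ε * (ε - 1) * (ε - 2))

theorem coeff_eq_limitCoeff_add_smul :
    ![q1 γ R T Γ ε β φb x, q2 γ R T Γ ε β φb x, q3 γ R T Γ ε β φb x, q4 γ R T Γ ε β φb x,
        q5 γ R T Γ ε β φb x]
      = limitCoeff γ R T ε
        + (Bfun β x ^ 2 * Γ ^ 2)⁻¹ • correctionCoeff γ R T Γ ε (Sfun β Γ φb x) := by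
  ext i
  fin_cases i <;>
    simp [q1, q2, q3, q4, q5, limitCoeff, correctionCoeff, div_eq_inv_mul _ (_ * Γ ^ 2)]

theorem continuous_correctionCoeff : Continuous (correctionCoeff γ R T Γ ε) := by
  refine continuous_pi fun i ↦ ?_
  fin_cases i <;> simp only [correctionCoeff] <;> fun_prop

theorem tridiagDiscr_limitCoeff (hγ : γ - 1 ≠ 0) : tridiagDiscr (limitCoeff γ R T ε) = 0 := by
  simp only [tridiagDiscr, limitCoeff, Matrix.cons_val]
  field_simp
  ring

theorem tridiagDiscrDeriv_limitCoeff_correctionCoeff (hγ : γ - 1 ≠ 0) (hT : T ≠ 0) :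
    tridiagDiscrDeriv (limitCoeff γ R T ε) (correctionCoeff γ R T Γ ε s)
      = -(ε ^ 2 * R ^ 2 / (γ - 1) * discrMargin γ R T Γ ε s) := by
  simp only [tridiagDiscrDeriv, limitCoeff, correctionCoeff, discrMargin, Matrix.cons_val]
  field_simp
  ring

theorem monotoneOn_discrMargin (hγ : 1 ≤ γ) (hRT : 0 ≤ R * T) (hε : 0 ≤ ε) :
    MonotoneOn (discrMargin γ R T Γ ε) (Ici 0) := by
  intro r hr s _ hrs
  have hr' : 0 ≤ r := hr
  have hγ' : 0 ≤ γ - 1 := sub_nonneg.2 hγ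
  unfold discrMargin
  gcongr

theorem discrMargin_one_pos (hγ : 1 ≤ γ) (hRT : 0 ≤ R * T) (hε : 0 ≤ ε)
    (hΓ : Γ ^ 2 = ((γ ^ 2 + γ) * R * T + 2) / 12)
    (hcubic : ε * (ε - 1) * (ε - 2) ≤ 24 / (1 + γ) * ε + 24) :
    0 < discrMargin γ R T Γ ε 1 := by
  have hγ' : 0 ≤ γ - 1 := sub_nonneg.2 hγ
  have hγ₀ : 0 < 1 + γ := by linarith
  have hlower : ε * (γ - 1) / (1 + γ) + ε * (R * T) * (γ - 1) / 2 + 2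
      = discrMargin γ R T Γ ε 1
        - Γ ^ 2 / 2 * (24 / (1 + γ) * ε + 24 - ε * (ε - 1) * (ε - 2)) := by
    rw [discrMargin, hΓ]
    field_simp
    ring
  have hcubic' : 0 ≤ 24 / (1 + γ) * ε + 24 - ε * (ε - 1) * (ε - 2) := sub_nonneg.2 hcubic
  calc 0 < ε * (γ - 1) / (1 + γ) + ε * (R * T) * (γ - 1) / 2 + 2 := by positivity
    _ ≤ discrMargin γ R T Γ ε 1 := by
        rw [hlower]
        exact sub_le_self _ (by positivity)

theorem cubic_le_affine_of_le_root {m d l : ℝ} (hd : 0 ≤ d) (hl : 3 ≤ l)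
    (hroot : l * (l - 1) * (l - 2) = m * l + d) (hε : 0 ≤ ε) (hεl : ε ≤ l) :
    ε * (ε - 1) * (ε - 2) ≤ m * ε + d := by
  have hl₀ : 0 < l := by linarith
  have hdiff : l * (m * ε + d - ε * (ε - 1) * (ε - 2))
      = (l - ε) * (ε * l * (ε + (l - 3)) + d) := by
    linear_combination -ε * hroot
  have hl' : 0 ≤ l - 3 := sub_nonneg.2 hl
  have hprod : 0 ≤ l * (m * ε + d - ε * (ε - 1) * (ε - 2)) := by
    rw [hdiff]
    exact mul_nonneg (sub_nonneg.2 hεl) (by positivity)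
  exact sub_nonneg.1 (nonneg_of_mul_nonneg_right hprod hl₀)

theorem Sfun_mem_Icc (hβ : 0 < β) (hθ : 0 < θ) (hx : 0 ≤ x)
    (hlower : θ ≤ β / (Γ * √φb)) (hupper : β / (Γ * √φb) ≤ 1) :
    Sfun β Γ φb x ∈ Icc 1 θ⁻¹ := by
  have hw : 0 < Γ * √φb := (div_pos_iff_of_pos_left hβ).1 (hθ.trans_le hlower)
  have hden : 0 < x + (Γ * √φb)⁻¹ := by positivity
  have hθ₁ : 1 ≤ θ⁻¹ := (one_le_inv₀ hθ).2 (hlower.trans hupper)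
  have hinv : (Γ * √φb)⁻¹ ≤ β⁻¹ := inv_anti₀ hβ ((div_le_one hw).1 hupper)
  have hβinv : β⁻¹ ≤ θ⁻¹ * (Γ * √φb)⁻¹ := by
    rw [← mul_inv]
    exact inv_anti₀ (by positivity) ((le_div_iff₀ hw).1 hlower)
  rw [Sfun, ← mul_inv]
  refine ⟨(one_le_div hden).2 (by gcongr), (div_le_iff₀ hden).2 ?_⟩
  rw [mul_add]
  exact add_le_add (le_mul_of_one_le_left hx hθ₁) hβinv

theorem inv_sq_Bfun_mul_sq_le (hΓ : 0 < Γ) (hφ : 0 < φb) (hβ : 0 < β) (hx : 0 ≤ x)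
    (hupper : β / (Γ * √φb) ≤ 1) : (Bfun β x ^ 2 * Γ ^ 2)⁻¹ ≤ φb := by
  have hw : 0 < Γ * √φb := by positivity
  have hB : (Γ * √φb)⁻¹ ≤ Bfun β x :=
    (inv_anti₀ hβ ((div_le_one hw).1 hupper)).trans (le_add_of_nonneg_left hx)
  calc (Bfun β x ^ 2 * Γ ^ 2)⁻¹ ≤ ((Γ * √φb)⁻¹ ^ 2 * Γ ^ 2)⁻¹ := by gcongr
    _ = √φb ^ 2 := by field_simp
    _ = φb := Real.sq_sqrt hφ.le

end Coefficients

theorem degenerate_coefficients_cubic_discriminant_general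
    {γ R T Γ ε θ : ℝ} (hγ : 1 < γ) (hR : 0 < R) (hT : 0 < T) (hΓ : 0 < Γ) (hε : 0 < ε)
    (hθ : 0 < θ) (hmargin : 0 < discrMargin γ R T Γ ε 1) :
    ∃ δ > 0, ∃ c > 0, ∀ φb β : ℝ, 0 < φb → φb ≤ δ → 0 < β →
      θ ≤ β / (Γ * √φb) → β / (Γ * √φb) ≤ 1 →
      ∀ x : ℝ, 0 ≤ x →
        q1 γ R T Γ ε β φb x * (q5 γ R T Γ ε β φb x) ^ 2
            + q4 γ R T Γ ε β φb x * (q2 γ R T Γ ε β φb x) ^ 2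
            - 4 * q1 γ R T Γ ε β φb x * q3 γ R T Γ ε β φb x * q4 γ R T Γ ε β φb x
          ≤ -(c / (Bfun β x) ^ 2) := by
  have hγ' : 0 < γ - 1 := sub_pos.2 hγ
  have hderiv : ∀ s ∈ Icc 1 θ⁻¹,
      tridiagDiscrDeriv (limitCoeff γ R T ε) (correctionCoeff γ R T Γ ε s) < 0 := by
    intro s hs
    have hpos : 0 < discrMargin γ R T Γ ε s :=
      hmargin.trans_le <| monotoneOn_discrMargin hγ.le (mul_pos hR hT).le hε.le
        (mem_Ici.2 zero_le_one) (mem_Ici.2 (zero_le_one.trans hs.1)) hs.1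
    rw [tridiagDiscrDeriv_limitCoeff_correctionCoeff hγ'.ne' hT.ne', neg_lt_zero]
    positivity
  obtain ⟨δ, hδ, hle⟩ := exists_forall_tridiagDiscr_add_smul_le isCompact_Icc
    continuous_correctionCoeff (tridiagDiscr_limitCoeff hγ'.ne') hderiv
  refine ⟨δ, hδ, δ / Γ ^ 2, by positivity, fun φb β hφ hφδ hβ hlower hupper x hx ↦ ?_⟩
  have ht := (inv_sq_Bfun_mul_sq_le hΓ hφ hβ hx hupper).trans hφδ
  have hbound := hle _ (Sfun_mem_Icc hβ hθ hx hlower hupper) _ ⟨by positivity, ht⟩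
  rw [← coeff_eq_limitCoeff_add_smul] at hbound
  rwa [div_div, mul_comm (Γ ^ 2), div_eq_mul_inv]

/-- Key negativity estimate (paper eq. (46)): for `φ_b` small, the combination
`q₁q₅² + q₄q₂² − 4q₁q₃q₄` is bounded above by `−c B(x₁)^{−2}` for all `x₁ ≥ 0`. -/
theorem degenerate_coefficients_cubic_discriminant
    (γ R T Γ l₀ ε θ : ℝ)
    (hγ : 1 < γ) (hR : 0 < R) (hT : 0 < T)
    (hΓ : Γ = Real.sqrt (((γ ^ 2 + γ) * R * T + 2) / 12))
    (hl₀ : 4 < l₀)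
    (hl₀root : l₀ * (l₀ - 1) * (l₀ - 2) - 12 * (2 * l₀ / (1 + γ) + 2) = 0)
    (hε4 : 4 ≤ ε) (hεl : ε < l₀)
    (hθ : 0 < θ) (hθ1 : θ ≤ 1) :
    ∃ δ > 0, ∃ c > 0, ∀ φb β : ℝ, 0 < φb → φb ≤ δ → 0 < β →
      θ ≤ β / (Γ * Real.sqrt φb) → β / (Γ * Real.sqrt φb) ≤ 1 →
      ∀ x : ℝ, 0 ≤ x →
        q1 γ R T Γ ε β φb x * (q5 γ R T Γ ε β φb x) ^ 2
            + q4 γ R T Γ ε β φb x * (q2 γ R T Γ ε β φb x) ^ 2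
            - 4 * q1 γ R T Γ ε β φb x * q3 γ R T Γ ε β φb x * q4 γ R T Γ ε β φb x
          ≤ -(c / (Bfun β x) ^ 2) := by
  have hΓsq : 0 < ((γ ^ 2 + γ) * R * T + 2) / 12 := by positivity
  have hε : 0 < ε := by linarith
  have hcubic := cubic_le_affine_of_le_root (m := 24 / (1 + γ)) (d := 24) (by norm_num)
    (by linarith) (by linear_combination hl₀root) hε.le hεl.le
  exact degenerate_coefficients_cubic_discriminant_general hγ hR hT
    (hΓ ▸ Real.sqrt_pos.2 hΓsq) hε hθ
    (discrMargin_one_pos hγ.le (mul_pos hR hT).le hε.le (hΓ ▸ Real.sq_sqrt hΓsq.le) hcubic)
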